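/- In the preferential attachment model, the number of nodes of degree 1 at stage n is asymptotically normal: √n (N_n(1)/n − p_1) converges in distribution to N(0, σ_1²(δ)) as n → ∞, where p_1 = (2+δ)/(3+2δ) and σ_1²(δ) = (1+δ)(2+δ)² / ((3+2δ)²(4+3δ)). -/

import Mathlib

open MeasureTheory ProbabilityTheory Filter Finset

/-- The undirected preferential attachment model with parameter `δ > -1`.
`C n` is the node that node `n+1` attaches to (`0` meaning a self-loop),
`D n v` is the degree of node `v` in the graph `G n`, and `F` is the filtration
generated by the evolution of the graph. -/
structure PAModel {Ω : Type} (mΩ : MeasurableSpace Ω) (μ : Measure Ω) (δ : ℝ) : Type where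
  F : Filtration ℕ mΩ
  C : ℕ → Ω → ℕ
  D : ℕ → ℕ → Ω → ℕ
  C_le : ∀ n ω, 1 ≤ n → C n ω ≤ n
  C_meas : ∀ n, Measurable[F (n + 1)] (C n)
  D_one_one : ∀ ω, D 1 1 ω = 2
  D_one_ne : ∀ v ω, v ≠ 1 → D 1 v ω = 0
  D_meas : ∀ n v, Measurable[F n] (D n v)
  D_succ_old : ∀ n v ω, 1 ≤ v → v ≤ n →
    D (n + 1) v ω = D n v ω + if C n ω = v then 1 else 0
  D_succ_new : ∀ n ω, 1 ≤ n → D (n + 1) (n + 1) ω = if C n ω = 0 then 2 else 1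
  D_succ_out : ∀ n v ω, n + 1 < v → D (n + 1) v ω = 0
  attach_prob : ∀ n v, 1 ≤ v → v ≤ n →
    μ[Set.indicator {ω | C n ω = v} (fun _ => (1 : ℝ)) | F n]
      =ᵐ[μ] fun ω => ((D n v ω : ℝ) + δ) / (n * (2 + δ) + (1 + δ))
  self_prob : ∀ n, 1 ≤ n →
    μ[Set.indicator {ω | C n ω = 0} (fun _ => (1 : ℝ)) | F n]
      =ᵐ[μ] fun _ => (1 + δ) / (n * (2 + δ) + (1 + δ))

namespace PAModel

variable {Ω : Type} {mΩ : MeasurableSpace Ω} {μ : Measure Ω} {δ : ℝ}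

/-- `N n k` is the number of nodes of degree `k` in the graph `G n`. -/
noncomputable def N (M : PAModel mΩ μ δ) (n k : ℕ) (ω : Ω) : ℝ :=
  ((Finset.Icc 1 n).filter (fun v => M.D n v ω = k)).card

end PAModel

/-!
With `a = (1 + δ) / (2 + δ)`, the centered number of degree-one nodes
`X n = N n 1 - (n - 1) / (1 + a)` satisfies `E[X (n + 1) | F n] = n / (n + a) * X n`: the count
grows by one unless node `n + 1` attaches to itself or to a degree-one node. Its prediction errors
are bounded, and since `X n / n → 0` in mean, their conditional variances tend in `L¹` to
`v = p (1 - p)`, where `p = a / (1 + a)`.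

For such an autoregression with coefficients `r n`, a second-order Taylor expansion gives
`φ (n + 1) l ≈ exp (-v l² / 2) * φ n (r n * l)` for the characteristic functions `φ n` of `X n`.
Because `n * (1 - r n) → a`, the functions `exp (-s n l² / 2)` with `s = v / (1 + 2 a)` nearly
satisfy the same recursion. The errors of the two recursions at most add up, as `|r n| ≤ 1`, and at
`l = t / √n` their sum is a Cesàro mean of a null sequence up to terms of order `n^(-1/2)`.
-/

section Elementary

lemma abs_mul_one_sub_sub_le {p q : ℝ} (hp : p ∈ Set.Icc 0 1) (hq : q ∈ Set.Icc 0 1) :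
    |q * (1 - q) - p * (1 - p)| ≤ |q - p| := by
  have factor : q * (1 - q) - p * (1 - p) = (1 - p - q) * (q - p) := by ring
  rw [factor, abs_mul]
  exact mul_le_of_le_one_left (abs_nonneg _)
    (abs_le.2 ⟨by linarith [hp.2, hq.2], by linarith [hp.1, hq.1]⟩)

lemma norm_exp_mul_I_sub_taylor_le (x : ℝ) :
    ‖Complex.exp (x * Complex.I) - (1 + x * Complex.I - (x : ℂ) ^ 2 / 2)‖ ≤ 4 * |x| ^ 3 := by
  have norm_mul_I : ‖(x : ℂ) * Complex.I‖ = |x| := by simp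
  rcases le_total |x| 1 with hx | hx
  · have h := Complex.exp_bound (x := x * Complex.I) (norm_mul_I.trans_le hx) (n := 3) (by norm_num)
    have taylor_sum : ∑ k ∈ Finset.range 3, ((x : ℂ) * Complex.I) ^ k / (k.factorial : ℂ)
        = 1 + x * Complex.I - (x : ℂ) ^ 2 / 2 := by
      simp only [mul_pow, Finset.sum_range_succ, Finset.range_one, Finset.sum_singleton, pow_zero,
        mul_one, Nat.factorial_zero, Nat.cast_one, ne_eq, one_ne_zero, not_false_eq_true, div_self,
        pow_one, Nat.factorial_one, div_one, Complex.I_sq, mul_neg, Nat.factorial_two,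
        Nat.cast_ofNat]
      ring
    rw [norm_mul_I, taylor_sum] at h
    refine h.trans ?_
    rw [mul_comm]
    gcongr
    norm_num [Nat.factorial]
  · calc ‖Complex.exp (x * Complex.I) - (1 + x * Complex.I - (x : ℂ) ^ 2 / 2)‖
        ≤ ‖Complex.exp (x * Complex.I)‖
          + (‖(1 : ℂ)‖ + ‖(x : ℂ) * Complex.I‖ + ‖(x : ℂ) ^ 2 / 2‖) :=
          (norm_sub_le _ _).trans
            (add_le_add_right ((norm_sub_le _ _).trans (add_le_add_left (norm_add_le _ _) _)) _)
      _ = 2 + |x| + |x| ^ 2 / 2 := by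
          rw [Complex.norm_exp_ofReal_mul_I, norm_mul_I]
          simp only [norm_one, Complex.norm_div, norm_pow, Complex.norm_real, Real.norm_eq_abs,
            sq_abs, Complex.norm_ofNat]
          ring
      _ ≤ 4 * |x| ^ 3 := by nlinarith [mul_nonneg (sub_nonneg.2 hx) (sq_nonneg |x|)]

lemma abs_exp_neg_sub_exp_neg_le {x y : ℝ} (hx : 0 ≤ x) (hy : 0 ≤ y) :
    |Real.exp (-x) - Real.exp (-y)| ≤ |x - y| := by
  wlog h : x ≤ y generalizing x y
  · rw [abs_sub_comm, abs_sub_comm x]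
    exact this hy hx (le_of_not_ge h)
  have exp_split : Real.exp (-y) = Real.exp (-x) * Real.exp (-(y - x)) := by
    rw [← Real.exp_add]
    ring_nf
  have exp_le_one : Real.exp (-x) ≤ 1 := Real.exp_le_one_iff.2 (neg_nonpos.2 hx)
  have exp_le_exp : Real.exp (-y) ≤ Real.exp (-x) := Real.exp_le_exp.2 (neg_le_neg h)
  rw [abs_of_nonneg (sub_nonneg.2 exp_le_exp), abs_of_nonpos (sub_nonpos.2 h)]
  nlinarith [Real.exp_pos (-x), Real.add_one_le_exp (-(y - x))]

lemma abs_one_sub_sub_exp_neg_le {x : ℝ} (hx : 0 ≤ x) : |1 - x - Real.exp (-x)| ≤ x ^ 2 := by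
  have lower : 1 - x ≤ Real.exp (-x) := Real.one_sub_le_exp_neg x
  have upper : Real.exp (-x) ≤ 1 - x + x ^ 2 := by
    rw [Real.exp_neg]
    refine inv_le_of_inv_le₀ (by nlinarith) ((inv_le_of_inv_le₀ (by positivity) ?_).trans
      (Real.add_one_le_exp x))
    rw [inv_eq_one_div, div_le_iff₀ (by positivity)]
    nlinarith [pow_nonneg hx 3]
  rw [abs_le]
  constructor <;> linarith

lemma tendsto_inv_sqrt_natCast : Tendsto (fun n : ℕ ↦ (√n)⁻¹) atTop (nhds 0) :=
  tendsto_inv_atTop_zero.comp (Real.tendsto_sqrt_atTop.comp tendsto_natCast_atTop_atTop)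

end Elementary

section ConditionalExpectation

variable {Ω : Type*} {m mΩ : MeasurableSpace Ω} {μ : Measure Ω}

section NormedSpace

variable {E : Type*} [NormedAddCommGroup E] [NormedSpace ℝ E] {f : Ω → ℝ} {Z : Ω → E}

lemma norm_integral_smul_le (hf : Integrable f μ) (hZ : ∀ ω, ‖Z ω‖ ≤ 1) :
    ‖∫ ω, f ω • Z ω ∂μ‖ ≤ ∫ ω, |f ω| ∂μ :=
  norm_integral_le_of_norm_le hf.abs <| .of_forall fun ω ↦ by
    rw [norm_smul, Real.norm_eq_abs]
    exact mul_le_of_le_one_right (abs_nonneg _) (hZ ω)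

variable [CompleteSpace E] [IsFiniteMeasure μ]

lemma integral_smul_eq_integral_condExp_smul (hm : m ≤ mΩ) (hf : Integrable f μ)
    (hZ : StronglyMeasurable[m] Z) (hfZ : Integrable (f • Z) μ) :
    ∫ ω, f ω • Z ω ∂μ = ∫ ω, (μ[f | m]) ω • Z ω ∂μ := calc
  ∫ ω, f ω • Z ω ∂μ = ∫ ω, (μ[f • Z | m]) ω ∂μ := (integral_condExp hm).symm
  _ = ∫ ω, (μ[f | m]) ω • Z ω ∂μ :=
    integral_congr_ae (condExp_smul_of_aestronglyMeasurable_right hf hfZ hZ.aestronglyMeasurable)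

lemma norm_integral_smul_sub_smul_integral_le (hm : m ≤ mΩ) (hf : Integrable f μ)
    (hZm : StronglyMeasurable[m] Z) (hZ : ∀ ω, ‖Z ω‖ ≤ 1) (c : ℝ) :
    ‖∫ ω, f ω • Z ω ∂μ - c • ∫ ω, Z ω ∂μ‖ ≤ ∫ ω, |(μ[f | m]) ω - c| ∂μ := by
  have hZm' : AEStronglyMeasurable Z μ := (hZm.mono hm).aestronglyMeasurable
  have bound : ∀ᵐ ω ∂μ, ‖Z ω‖ ≤ 1 := .of_forall hZ
  have int_Z : Integrable Z μ := .of_bound hZm' 1 bound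
  have int_condExp : Integrable (fun ω ↦ (μ[f | m]) ω • Z ω) μ :=
    (integrable_condExp (f := f) (m := m)).smul_bdd 1 hZm' bound
  rw [integral_smul_eq_integral_condExp_smul hm hf hZm (hf.smul_bdd 1 hZm' bound),
    ← integral_smul, ← integral_sub int_condExp (int_Z.fun_smul c)]
  refine le_of_eq_of_le ?_
    (norm_integral_smul_le (integrable_condExp.sub (integrable_const c)) hZ)
  simp only [sub_smul]

end NormedSpace

lemma condVar_add_of_stronglyMeasurable [IsFiniteMeasure μ] (hm : m ≤ mΩ) {X Y : Ω → ℝ}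
    (hX : Integrable X μ) (hYm : StronglyMeasurable[m] Y) (hY : Integrable Y μ) :
    Var[X + Y; μ | m] =ᵐ[μ] Var[X; μ | m] := by
  refine condExp_congr_ae ?_
  filter_upwards [condExp_add hX hY m] with ω hω
  rw [condExp_of_stronglyMeasurable hm hYm hY] at hω
  simp [hω]

lemma condVar_indicator_one [IsFiniteMeasure μ] (hm : m ≤ mΩ) {s : Set Ω} (hs : MeasurableSet s) :
    Var[s.indicator (fun _ ↦ (1 : ℝ)); μ | m] =ᵐ[μ]
      fun ω ↦ (μ[s.indicator fun _ ↦ (1 : ℝ) | m]) ω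
        * (1 - (μ[s.indicator fun _ ↦ (1 : ℝ) | m]) ω) := by
  have sq_eq : s.indicator (fun _ ↦ (1 : ℝ)) ^ 2 = s.indicator fun _ ↦ 1 := by
    ext ω
    by_cases h : ω ∈ s <;> simp [h]
  filter_upwards [condVar_ae_eq_condExp_sq_sub_sq_condExp hm
    ((memLp_const (p := 2) (1 : ℝ)).indicator hs)] with ω hω
  rw [hω, sq_eq]
  simp only [Pi.sub_apply, Pi.pow_apply]
  ring

end ConditionalExpectation

section ExpIncrement

variable {Ω : Type*} {m mΩ : MeasurableSpace Ω} {μ : Measure Ω} {ξ : Ω → ℝ} {Z : Ω → ℂ}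

lemma norm_integral_exp_mul_sub_taylor_le [IsFiniteMeasure μ] (hξ : MemLp ξ 3 μ)
    (hZm : AEStronglyMeasurable Z μ) (hZ : ∀ ω, ‖Z ω‖ ≤ 1) (l : ℝ) :
    ‖∫ ω, Complex.exp ((l * ξ ω : ℝ) * Complex.I) * Z ω ∂μ
        - (∫ ω, Z ω ∂μ + l * Complex.I * ∫ ω, ξ ω • Z ω ∂μ
          - (l : ℂ) ^ 2 / 2 * ∫ ω, ξ ω ^ 2 • Z ω ∂μ)‖
      ≤ 4 * |l| ^ 3 * ∫ ω, |ξ ω| ^ 3 ∂μ := by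
  have hξ2 : MemLp ξ 2 μ := hξ.mono_exponent (by norm_num)
  have bound : ∀ᵐ ω ∂μ, ‖Z ω‖ ≤ 1 := .of_forall hZ
  have int_exp : Integrable (fun ω ↦ Complex.exp ((l * ξ ω : ℝ) * Complex.I) * Z ω) μ := by
    have := hξ.aestronglyMeasurable.aemeasurable
    refine .of_bound (.mul (AEMeasurable.aestronglyMeasurable (by fun_prop)) hZm) 1
      (.of_forall fun ω ↦ ?_)
    rw [norm_mul, Complex.norm_exp_ofReal_mul_I, one_mul]
    exact hZ ω
  have int_Z : Integrable Z μ := .of_bound hZm 1 bound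
  have int_mul : Integrable (fun ω ↦ ξ ω • Z ω) μ :=
    (hξ.integrable (by norm_num)).smul_bdd 1 hZm bound
  have int_sq_mul : Integrable (fun ω ↦ ξ ω ^ 2 • Z ω) μ := hξ2.integrable_sq.smul_bdd 1 hZm bound
  have int_affine : Integrable (fun ω ↦ Z ω + l * Complex.I * (ξ ω • Z ω)) μ :=
    int_Z.add (int_mul.const_mul _)
  have int_taylor : Integrable (fun ω ↦ Z ω + l * Complex.I * (ξ ω • Z ω)
      - (l : ℂ) ^ 2 / 2 * (ξ ω ^ 2 • Z ω)) μ := int_affine.sub (int_sq_mul.const_mul _)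
  rw [← integral_const_mul, ← integral_const_mul, ← integral_add int_Z (int_mul.const_mul _),
    ← integral_sub int_affine (int_sq_mul.const_mul _),
    ← integral_sub int_exp int_taylor, ← integral_const_mul]
  refine norm_integral_le_of_norm_le ((hξ.integrable_norm_pow (by norm_num)).const_mul _)
    (.of_forall fun ω ↦ ?_)
  have factor : Complex.exp ((l * ξ ω : ℝ) * Complex.I) * Z ω
      - (Z ω + l * Complex.I * (ξ ω • Z ω) - (l : ℂ) ^ 2 / 2 * (ξ ω ^ 2 • Z ω))
      = (Complex.exp ((l * ξ ω : ℝ) * Complex.I)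
        - (1 + (l * ξ ω : ℝ) * Complex.I - ((l * ξ ω : ℝ) : ℂ) ^ 2 / 2)) * Z ω := by
    simp only [Complex.real_smul]
    push_cast
    ring
  rw [factor, norm_mul]
  refine (mul_le_of_le_one_right (norm_nonneg _) (hZ ω)).trans
    ((norm_exp_mul_I_sub_taylor_le _).trans_eq ?_)
  rw [abs_mul, mul_pow, mul_assoc]

lemma norm_integral_exp_mul_sub_le [IsProbabilityMeasure μ] (hm : m ≤ mΩ) (hξ : MemLp ξ 3 μ)
    (hξ_zero : μ[ξ | m] =ᵐ[μ] 0) (hZm : StronglyMeasurable[m] Z) (hZ : ∀ ω, ‖Z ω‖ ≤ 1)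
    {v : ℝ} (hv : 0 ≤ v) (l : ℝ) :
    ‖∫ ω, Complex.exp ((l * ξ ω : ℝ) * Complex.I) * Z ω ∂μ
        - Real.exp (-(v * l ^ 2 / 2)) * ∫ ω, Z ω ∂μ‖
      ≤ 4 * |l| ^ 3 * ∫ ω, |ξ ω| ^ 3 ∂μ + l ^ 2 / 2 * ∫ ω, |(μ[ξ ^ 2 | m]) ω - v| ∂μ
        + (v * l ^ 2 / 2) ^ 2 := by
  have first_moment : ∫ ω, ξ ω • Z ω ∂μ = 0 := by
    have h := norm_integral_smul_sub_smul_integral_le hm (hξ.integrable (by norm_num)) hZm hZ 0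
    have abs_zero : ∫ ω, |(μ[ξ | m]) ω - 0| ∂μ = 0 :=
      integral_eq_zero_of_ae (hξ_zero.mono fun ω hω ↦ by simp [hω])
    rw [abs_zero] at h
    simpa using h
  have second_moment : ‖∫ ω, ξ ω ^ 2 • Z ω ∂μ - v * ∫ ω, Z ω ∂μ‖
      ≤ ∫ ω, |(μ[ξ ^ 2 | m]) ω - v| ∂μ :=
    norm_integral_smul_sub_smul_integral_le hm (hξ.mono_exponent (by norm_num)).integrable_sq
      hZm hZ v
  have var_error : ‖(l : ℂ) ^ 2 / 2 * (∫ ω, ξ ω ^ 2 • Z ω ∂μ - v * ∫ ω, Z ω ∂μ)‖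
      ≤ l ^ 2 / 2 * ∫ ω, |(μ[ξ ^ 2 | m]) ω - v| ∂μ := by
    rw [norm_mul]
    exact mul_le_mul (by simp) second_moment (norm_nonneg _) (by positivity)
  have exp_error : ‖((1 - v * l ^ 2 / 2 - Real.exp (-(v * l ^ 2 / 2)) : ℝ) : ℂ) * ∫ ω, Z ω ∂μ‖
      ≤ (v * l ^ 2 / 2) ^ 2 := by
    have mean_le_one : ‖∫ ω, Z ω ∂μ‖ ≤ 1 := by
      simpa using norm_integral_le_of_norm_le (integrable_const (μ := μ) (1 : ℝ)) (.of_forall hZ)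
    rw [norm_mul, Complex.norm_real]
    exact (mul_le_of_le_one_right (norm_nonneg _) mean_le_one).trans
      (abs_one_sub_sub_exp_neg_le (by positivity))
  have taylor := norm_integral_exp_mul_sub_taylor_le hξ (hZm.mono hm).aestronglyMeasurable hZ l
  rw [first_moment, mul_zero, add_zero] at taylor
  refine le_of_eq_of_le ?_ (norm_add₃_le.trans (add_le_add_three taylor
    ((norm_neg _).trans_le var_error) exp_error))
  congr 1
  push_cast
  ring

end ExpIncrement

section Law

variable {Ω : Type*} {mΩ : MeasurableSpace Ω} {μ : Measure Ω}

lemma tendsto_integral_of_tendstoInDistribution [IsProbabilityMeasure μ] {Ω' E ι : Type*}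
    {mΩ' : MeasurableSpace Ω'} {ν : Measure Ω'} [IsProbabilityMeasure ν] [TopologicalSpace E]
    [MeasurableSpace E] [OpensMeasurableSpace E]
    {l : Filter ι} {X : ι → Ω → E} {Y : Ω' → E}
    (h : TendstoInDistribution X l Y (fun _ ↦ μ) ν) (f : BoundedContinuousFunction E ℝ) :
    Tendsto (fun i ↦ ∫ ω, f (X i ω) ∂μ) l (nhds (∫ ω, f (Y ω) ∂ν)) := by
  have h_map := ProbabilityMeasure.tendsto_iff_forall_integral_tendsto.1 h.tendsto f
  simpa only [ProbabilityMeasure.coe_mk,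
    integral_map (h.forall_aemeasurable _) f.continuous.aestronglyMeasurable,
    integral_map h.aemeasurable_limit f.continuous.aestronglyMeasurable] using h_map

lemma charFun_map_eq_integral {Y : Ω → ℝ} (hY : AEMeasurable Y μ) (t : ℝ) :
    charFun (μ.map Y) t = ∫ ω, Complex.exp ((t * Y ω : ℝ) * Complex.I) ∂μ := by
  rw [charFun_apply_real, integral_map hY (by fun_prop)]
  push_cast
  rfl

lemma norm_charFun_map_sub_one_le [IsProbabilityMeasure μ] {Y : Ω → ℝ} (hY : Integrable Y μ)
    (t : ℝ) : ‖charFun (μ.map Y) t - 1‖ ≤ |t| * ∫ ω, |Y ω| ∂μ := by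
  have int_exp : Integrable (fun ω ↦ Complex.exp ((t * Y ω : ℝ) * Complex.I)) μ := by
    have := hY.aemeasurable
    exact .of_bound (AEMeasurable.aestronglyMeasurable (by fun_prop)) 1
      (.of_forall fun ω ↦ (Complex.norm_exp_ofReal_mul_I _).le)
  have charFun_sub_one : charFun (μ.map Y) t - 1
      = ∫ ω, (Complex.exp ((t * Y ω : ℝ) * Complex.I) - 1) ∂μ := by
    rw [integral_sub int_exp (integrable_const 1), charFun_map_eq_integral hY.aemeasurable]
    simp
  rw [charFun_sub_one, ← integral_const_mul]
  refine norm_integral_le_of_norm_le (hY.abs.const_mul |t|) (.of_forall fun ω ↦ ?_)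
  rw [mul_comm _ Complex.I, ← abs_mul]
  exact Real.norm_exp_I_mul_ofReal_sub_one_le

end Law

section Autoregression

open scoped NNReal Topology

variable {Ω : Type*} {mΩ : MeasurableSpace Ω} {μ : Measure Ω} {ℱ : Filtration ℕ mΩ}
  {X : ℕ → Ω → ℝ} {r : ℕ → ℝ} {a v : ℝ≥0} {K : ℝ}

/-- A first-order autoregression with deterministic, time-dependent coefficients `r n`: an adapted
process whose best prediction of `X (n + 1)` at time `n` is `r n • X n`. The case `r = 1` is that
of martingales; integrability is not part of the definition. -/
structure IsAutoregression (X : ℕ → Ω → ℝ) (r : ℕ → ℝ) (ℱ : Filtration ℕ mΩ) (μ : Measure Ω) :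
    Prop where
  stronglyAdapted : StronglyAdapted ℱ X
  condExp_succ : ∀ n, μ[X (n + 1) | ℱ n] =ᵐ[μ] r n • X n

/-- The prediction error at time `n + 1` of the autoregression `X` with coefficients `r`. -/
def innovation (X : ℕ → Ω → ℝ) (r : ℕ → ℝ) (n : ℕ) : Ω → ℝ := X (n + 1) - r n • X n

lemma succ_eq_innovation_add (X : ℕ → Ω → ℝ) (r : ℕ → ℝ) (n : ℕ) :
    X (n + 1) = innovation X r n + r n • X n := (sub_add_cancel _ _).symm

lemma memLp_of_innovation {p : ENNReal} (hX₀ : MemLp (X 0) p μ)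
    (hξ : ∀ n, MemLp (innovation X r n) p μ) (n : ℕ) : MemLp (X n) p μ := by
  induction n with
  | zero => exact hX₀
  | succ n ih => exact succ_eq_innovation_add X r n ▸ (hξ n).add (ih.const_smul (r n))

lemma norm_sub_le_of_approx_recursion {φ γ : ℕ → ℝ → ℂ} {c : ℝ → ℂ} {ε η : ℕ → ℝ} {B L : ℝ}
    (hr : ∀ n, |r n| ≤ 1) (hc : ∀ l, ‖c l‖ ≤ 1)
    (h_zero : ∀ l, |l| ≤ L → ‖φ 0 l - γ 0 l‖ ≤ B)
    (hφ : ∀ n l, |l| ≤ L → ‖φ (n + 1) l - c l * φ n (r n * l)‖ ≤ ε n)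
    (hγ : ∀ n l, |l| ≤ L → ‖γ (n + 1) l - c l * γ n (r n * l)‖ ≤ η n) (n : ℕ) {l : ℝ}
    (hl : |l| ≤ L) : ‖φ n l - γ n l‖ ≤ B + ∑ k ∈ Finset.range n, (ε k + η k) := by
  induction n generalizing l with
  | zero => simpa using h_zero l hl
  | succ n ih =>
    have hrl : |r n * l| ≤ L := by
      rw [abs_mul]
      exact (mul_le_of_le_one_left (abs_nonneg _) (hr n)).trans hl
    have h_past : ‖c l * (φ n (r n * l) - γ n (r n * l))‖
        ≤ B + ∑ k ∈ Finset.range n, (ε k + η k) := by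
      rw [norm_mul]
      exact (mul_le_of_le_one_left (norm_nonneg _) (hc l)).trans (ih hrl)
    calc ‖φ (n + 1) l - γ (n + 1) l‖
        = ‖c l * (φ n (r n * l) - γ n (r n * l)) + (φ (n + 1) l - c l * φ n (r n * l))
            + -(γ (n + 1) l - c l * γ n (r n * l))‖ := by ring_nf
      _ ≤ B + ∑ k ∈ Finset.range n, (ε k + η k) + ε n + η n :=
          norm_add₃_le.trans (add_le_add_three h_past (hφ n l hl)
            ((norm_neg _).trans_le (hγ n l hl)))
      _ = B + ∑ k ∈ Finset.range (n + 1), (ε k + η k) := by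
          rw [Finset.sum_range_succ]
          ring

lemma tendsto_abs_variance_defect (v : ℝ≥0)
    (hra : Tendsto (fun n : ℕ ↦ n * (1 - r n)) atTop (𝓝 a)) :
    Tendsto (fun n : ℕ ↦ |v + (v / (1 + 2 * a) : ℝ≥0) * n * r n ^ 2
      - (v / (1 + 2 * a) : ℝ≥0) * (n + 1)|) atTop (𝓝 0) := by
  have h_one : Tendsto r atTop (𝓝 1) := by
    have h_prod := hra.mul (tendsto_inv_atTop_nhds_zero_nat (𝕜 := ℝ))
    rw [mul_zero] at h_prod
    have h_sub := (tendsto_const_nhds (x := (1 : ℝ))).sub h_prod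
    rw [sub_zero] at h_sub
    refine h_sub.congr' ?_
    filter_upwards [eventually_ne_atTop 0] with n hn
    have n_ne : (n : ℝ) ≠ 0 := Nat.cast_ne_zero.2 hn
    field_simp
    ring
  have h_sq : Tendsto (fun n : ℕ ↦ n * (1 - r n) * (1 + r n)) atTop (𝓝 (a * (1 + 1))) :=
    hra.mul (h_one.const_add 1)
  have h_lim := ((h_sq.add_const 1).const_mul (v / (1 + 2 * a) : ℝ)).const_sub (v : ℝ) |>.abs
  have h_den : 1 + 2 * (a : ℝ) ≠ 0 := by positivity
  convert h_lim using 2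
  · push_cast
    ring_nf
  · rw [eq_comm, abs_eq_zero]
    field_simp
    ring

lemma tendsto_charFun_error_bound {d : ℕ → ℝ} {A : ℝ} (t : ℝ) (hd : Tendsto d atTop (𝓝 0)) :
    Tendsto (fun n : ℕ ↦ |(√n)⁻¹ * t| * A
      + n * (4 * |(√n)⁻¹ * t| ^ 3 * K + (v * ((√n)⁻¹ * t) ^ 2 / 2) ^ 2)
      + ((√n)⁻¹ * t) ^ 2 / 2 * ∑ k ∈ Finset.range n, d k) atTop (𝓝 0) := by
  have h_lim := ((tendsto_inv_sqrt_natCast.mul_const (|t| * A + 4 * |t| ^ 3 * K)).add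
    ((tendsto_inv_sqrt_natCast.pow 2).mul_const ((v * t ^ 2 / 2) ^ 2))).add
    (hd.cesaro.const_mul (t ^ 2 / 2))
  simp only [zero_mul, mul_zero, add_zero, ne_eq, OfNat.ofNat_ne_zero, not_false_eq_true,
    zero_pow] at h_lim
  refine h_lim.congr' ?_
  filter_upwards [eventually_gt_atTop 0] with n hn
  have sqrt_pos : 0 < √(n : ℝ) := Real.sqrt_pos.2 (Nat.cast_pos.2 hn)
  have n_eq : (n : ℝ) = √n ^ 2 := (Real.sq_sqrt n.cast_nonneg).symm
  rw [abs_mul, abs_inv, abs_of_pos sqrt_pos]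
  set w := √(n : ℝ)
  rw [n_eq]
  field_simp
  ring

lemma abs_exp_mul_exp_sub_exp_le {v s k : ℝ} (hv : 0 ≤ v) (hs : 0 ≤ s) (hk : 0 ≤ k) (ρ l : ℝ) :
    |Real.exp (-(v * l ^ 2 / 2)) * Real.exp (-(s * k * (ρ * l) ^ 2 / 2))
        - Real.exp (-(s * (k + 1) * l ^ 2 / 2))|
      ≤ l ^ 2 / 2 * |v + s * k * ρ ^ 2 - s * (k + 1)| := by
  rw [← Real.exp_add, ← neg_add]
  refine (abs_exp_neg_sub_exp_neg_le (by positivity) (by positivity)).trans_eq ?_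
  rw [← abs_of_nonneg (a := l ^ 2 / 2) (by positivity), ← abs_mul]
  ring_nf

namespace IsAutoregression

lemma condExp_innovation [IsFiniteMeasure μ] (h : IsAutoregression X r ℱ μ)
    (hX : ∀ n, Integrable (X n) μ) (n : ℕ) :
    μ[innovation X r n | ℱ n] =ᵐ[μ] 0 := by
  have int_pred : Integrable (r n • X n) μ := (hX n).smul (r n)
  filter_upwards [condExp_sub (hX (n + 1)) int_pred (ℱ n), h.condExp_succ n] with ω h_sub h_succ
  rw [innovation, h_sub, Pi.sub_apply, h_succ, condExp_of_stronglyMeasurable (ℱ.le n)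
    ((h.stronglyAdapted n).const_smul (r n)) int_pred, sub_self, Pi.zero_apply]

lemma condExp_innovation_sq (h : IsAutoregression X r ℱ μ) (n : ℕ) :
    μ[innovation X r n ^ 2 | ℱ n] =ᵐ[μ] Var[X (n + 1); μ | ℱ n] :=
  condExp_congr_ae <| (h.condExp_succ n).mono fun ω hω ↦ by simp [innovation, hω]

variable [IsProbabilityMeasure μ]

lemma integral_sq_succ (h : IsAutoregression X r ℱ μ) (hX : ∀ n, MemLp (X n) 2 μ) (n : ℕ) :
    ∫ ω, X (n + 1) ω ^ 2 ∂μ = ∫ ω, innovation X r n ω ^ 2 ∂μ + r n ^ 2 * ∫ ω, X n ω ^ 2 ∂μ := by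
  have condVar_eq : μ[innovation X r n ^ 2 | ℱ n] =ᵐ[μ]
      fun ω ↦ (μ[X (n + 1) ^ 2 | ℱ n]) ω - r n ^ 2 * X n ω ^ 2 := by
    filter_upwards [h.condExp_innovation_sq n, h.condExp_succ n,
      condVar_ae_eq_condExp_sq_sub_sq_condExp (ℱ.le n) (hX (n + 1))] with ω h_sq h_succ h_var
    rw [h_sq, h_var, Pi.sub_apply, Pi.pow_apply, h_succ, Pi.smul_apply, smul_eq_mul, mul_pow]
  have integral_eq := integral_congr_ae condVar_eq
  rw [integral_sub integrable_condExp ((hX n).integrable_sq.const_mul _), integral_condExp (ℱ.le n),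
    integral_condExp (ℱ.le n), integral_const_mul] at integral_eq
  simp only [Pi.pow_apply] at integral_eq
  linarith

lemma integral_sq_le (h : IsAutoregression X r ℱ μ) (hr : ∀ n, |r n| ≤ 1)
    (hX : ∀ n, MemLp (X n) 2 μ) (hK : ∀ n, ∫ ω, innovation X r n ω ^ 2 ∂μ ≤ K) (n : ℕ) :
    ∫ ω, X n ω ^ 2 ∂μ ≤ ∫ ω, X 0 ω ^ 2 ∂μ + n * K := by
  induction n with
  | zero => simp
  | succ n ih =>
    have contract : r n ^ 2 * ∫ ω, X n ω ^ 2 ∂μ ≤ ∫ ω, X n ω ^ 2 ∂μ :=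
      mul_le_of_le_one_left (integral_nonneg fun _ ↦ sq_nonneg _)
        ((sq_le_one_iff_abs_le_one _).2 (hr n))
    rw [h.integral_sq_succ hX, Nat.cast_succ]
    linarith [hK n]

lemma tendsto_integral_abs_div (h : IsAutoregression X r ℱ μ) (hr : ∀ n, |r n| ≤ 1)
    (hX : ∀ n, MemLp (X n) 2 μ) (hK : ∀ n, ∫ ω, innovation X r n ω ^ 2 ∂μ ≤ K) :
    Tendsto (fun n : ℕ ↦ (∫ ω, |X n ω| ∂μ) / n) atTop (𝓝 0) := by
  have sq_mean_le (n : ℕ) : (∫ ω, |X n ω| ∂μ) ^ 2 ≤ ∫ ω, X n ω ^ 2 ∂μ := by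
    have var_nonneg := variance_nonneg |X n| μ
    rw [variance_eq_sub (hX n).abs] at var_nonneg
    simpa using var_nonneg
  have inv_tendsto := tendsto_inv_atTop_nhds_zero_nat (𝕜 := ℝ)
  have h_sq : Tendsto (fun n : ℕ ↦ ((∫ ω, |X n ω| ∂μ) / n) ^ 2) atTop (𝓝 0) := by
    have h_bound := ((inv_tendsto.pow 2).mul_const (∫ ω, X 0 ω ^ 2 ∂μ)).add
      (inv_tendsto.mul_const K)
    simp only [zero_mul, add_zero, ne_eq, OfNat.ofNat_ne_zero, not_false_eq_true,
      zero_pow] at h_bound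
    refine squeeze_zero' (.of_forall fun _ ↦ sq_nonneg _) ?_ h_bound
    filter_upwards [eventually_gt_atTop 0] with n hn
    have : (0 : ℝ) < n := Nat.cast_pos.2 hn
    calc ((∫ ω, |X n ω| ∂μ) / n) ^ 2 ≤ (∫ ω, X 0 ω ^ 2 ∂μ + n * K) / n ^ 2 := by
          rw [div_pow]
          gcongr
          exact (sq_mean_le n).trans (h.integral_sq_le hr hX hK n)
      _ = (n : ℝ)⁻¹ ^ 2 * ∫ ω, X 0 ω ^ 2 ∂μ + (n : ℝ)⁻¹ * K := by
          field_simp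
  refine (Real.sqrt_zero ▸ h_sq.sqrt).congr fun n ↦ Real.sqrt_sq ?_
  exact div_nonneg (integral_nonneg fun _ ↦ abs_nonneg _) n.cast_nonneg

lemma norm_charFun_succ_sub_le (h : IsAutoregression X r ℱ μ) (hX₀ : Integrable (X 0) μ)
    (hξ : ∀ n, MemLp (innovation X r n) 3 μ) (n : ℕ) (l : ℝ) :
    ‖charFun (μ.map (X (n + 1))) l
        - Real.exp (-((v : ℝ) * l ^ 2 / 2)) * charFun (μ.map (X n)) (r n * l)‖
      ≤ 4 * |l| ^ 3 * ∫ ω, |innovation X r n ω| ^ 3 ∂μ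
        + l ^ 2 / 2 * ∫ ω, |(Var[X (n + 1); μ | ℱ n]) ω - (v : ℝ)| ∂μ + (v * l ^ 2 / 2) ^ 2 := by
  have int_X : ∀ n, Integrable (X n) μ := fun n ↦ memLp_one_iff_integrable.1 <|
    memLp_of_innovation (memLp_one_iff_integrable.2 hX₀)
      (fun n ↦ (hξ n).mono_exponent (by norm_num)) n
  have key := norm_integral_exp_mul_sub_le (ℱ.le n) (hξ n) (h.condExp_innovation int_X n)
    (Z := fun ω ↦ Complex.exp ((r n * l * X n ω : ℝ) * Complex.I))
    (by
      have := (h.stronglyAdapted n).measurable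
      exact Measurable.stronglyMeasurable (by fun_prop))
    (fun ω ↦ (Complex.norm_exp_ofReal_mul_I _).le) v.coe_nonneg l
  have var_eq : ∫ ω, |(μ[innovation X r n ^ 2 | ℱ n]) ω - (v : ℝ)| ∂μ
      = ∫ ω, |(Var[X (n + 1); μ | ℱ n]) ω - (v : ℝ)| ∂μ :=
    integral_congr_ae ((h.condExp_innovation_sq n).mono fun ω hω ↦ by simp only [hω])
  rw [var_eq] at key
  rw [charFun_map_eq_integral (int_X (n + 1)).aemeasurable,
    charFun_map_eq_integral (int_X n).aemeasurable]
  have exp_split (ω : Ω) : Complex.exp ((l * X (n + 1) ω : ℝ) * Complex.I)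
      = Complex.exp ((l * innovation X r n ω : ℝ) * Complex.I)
        * Complex.exp ((r n * l * X n ω : ℝ) * Complex.I) := by
    rw [← Complex.exp_add, succ_eq_innovation_add X r n]
    simp only [Pi.add_apply, Pi.smul_apply, smul_eq_mul]
    push_cast
    ring_nf
  simpa only [exp_split] using key

lemma norm_charFun_sub_exp_le (h : IsAutoregression X r ℱ μ) (hr : ∀ n, |r n| ≤ 1)
    (hX₀ : Integrable (X 0) μ) (hξ : ∀ n, MemLp (innovation X r n) 3 μ)
    (hK : ∀ n, ∫ ω, |innovation X r n ω| ^ 3 ∂μ ≤ K) (s : ℝ≥0) (n : ℕ) (l : ℝ) :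
    ‖charFun (μ.map (X n)) l - Real.exp (-(s * n * l ^ 2 / 2))‖
      ≤ |l| * ∫ ω, |X 0 ω| ∂μ + n * (4 * |l| ^ 3 * K + (v * l ^ 2 / 2) ^ 2)
        + l ^ 2 / 2 * ∑ k ∈ Finset.range n, (∫ ω, |(Var[X (k + 1); μ | ℱ k]) ω - v| ∂μ
          + |v + s * k * r k ^ 2 - s * (k + 1)|) := by
  have h_zero (t : ℝ) (ht : |t| ≤ |l|) :
      ‖charFun (μ.map (X 0)) t - Real.exp (-(s * (0 : ℕ) * t ^ 2 / 2))‖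
        ≤ |l| * ∫ ω, |X 0 ω| ∂μ := by
    have h_one : Real.exp (-(s * (0 : ℕ) * t ^ 2 / 2)) = 1 := by simp
    rw [h_one, Complex.ofReal_one]
    exact (norm_charFun_map_sub_one_le hX₀ t).trans (by gcongr)
  have h_charFun (k : ℕ) (t : ℝ) (ht : |t| ≤ |l|) :
      ‖charFun (μ.map (X (k + 1))) t
          - Real.exp (-((v : ℝ) * t ^ 2 / 2)) * charFun (μ.map (X k)) (r k * t)‖
        ≤ 4 * |l| ^ 3 * K + l ^ 2 / 2 * ∫ ω, |(Var[X (k + 1); μ | ℱ k]) ω - (v : ℝ)| ∂μ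
          + (v * l ^ 2 / 2) ^ 2 := by
    have h_sq : t ^ 2 ≤ l ^ 2 := sq_le_sq.2 ht
    refine (h.norm_charFun_succ_sub_le hX₀ hξ k t).trans ?_
    gcongr
    exact hK k
  have h_gauss (k : ℕ) (t : ℝ) (ht : |t| ≤ |l|) :
      ‖(Real.exp (-(s * (k + 1 : ℕ) * t ^ 2 / 2)) : ℂ)
          - Real.exp (-((v : ℝ) * t ^ 2 / 2)) * Real.exp (-(s * k * (r k * t) ^ 2 / 2))‖
        ≤ l ^ 2 / 2 * |v + s * k * r k ^ 2 - s * (k + 1)| := by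
    have h_sq : t ^ 2 ≤ l ^ 2 := sq_le_sq.2 ht
    rw [norm_sub_rev, ← Complex.ofReal_mul, ← Complex.ofReal_sub, Complex.norm_real, Nat.cast_succ]
    exact (abs_exp_mul_exp_sub_exp_le v.coe_nonneg s.coe_nonneg k.cast_nonneg (r k) t).trans
      (by gcongr)
  refine (norm_sub_le_of_approx_recursion (φ := fun k t ↦ charFun (μ.map (X k)) t)
    (γ := fun k t ↦ Real.exp (-(s * k * t ^ 2 / 2))) hr (fun t ↦ ?_) h_zero h_charFun h_gauss n
    le_rfl).trans_eq ?_
  · rw [Complex.norm_real, Real.norm_of_nonneg (Real.exp_pos _).le, Real.exp_le_one_iff, neg_nonpos]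
    positivity
  · simp only [Finset.sum_add_distrib, ← Finset.mul_sum, Finset.sum_const, Finset.card_range,
      nsmul_eq_mul]
    ring

theorem tendstoInDistribution (h : IsAutoregression X r ℱ μ) (hr : ∀ n, |r n| ≤ 1)
    (hra : Tendsto (fun n : ℕ ↦ n * (1 - r n)) atTop (𝓝 a)) (hX₀ : Integrable (X 0) μ)
    (hξ : ∀ n, MemLp (innovation X r n) 3 μ) (hK : ∀ n, ∫ ω, |innovation X r n ω| ^ 3 ∂μ ≤ K)
    (hv : Tendsto (fun n ↦ ∫ ω, |(Var[X (n + 1); μ | ℱ n]) ω - (v : ℝ)| ∂μ) atTop (𝓝 0))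
    {Ω' : Type*} {mΩ' : MeasurableSpace Ω'} {P' : Measure Ω'} [IsProbabilityMeasure P']
    {Y : Ω' → ℝ} (hY : HasLaw Y (gaussianReal 0 (v / (1 + 2 * a))) P') :
    TendstoInDistribution (fun (n : ℕ) ω ↦ (√n)⁻¹ * X n ω) atTop Y (fun _ ↦ μ) P' where
  forall_aemeasurable n := ((h.stronglyAdapted n).mono (ℱ.le n)).measurable.aemeasurable.const_mul _
  tendsto := by
    refine ProbabilityMeasure.tendsto_iff_tendsto_charFun.2 fun t ↦ ?_
    rw! [hY.map_eq]
    set s : ℝ≥0 := v / (1 + 2 * a) with hs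
    have h_error : Tendsto (fun n : ℕ ↦ charFun (μ.map (X n)) ((√n)⁻¹ * t)
        - Real.exp (-(s * n * ((√n)⁻¹ * t) ^ 2 / 2))) atTop (𝓝 0) :=
      squeeze_zero_norm (fun n ↦ h.norm_charFun_sub_exp_le (v := v) hr hX₀ hξ hK s n ((√n)⁻¹ * t))
        (tendsto_charFun_error_bound t
          (by simpa only [add_zero] using hv.add (tendsto_abs_variance_defect v hra)))
    have h_gauss : Tendsto (fun n : ℕ ↦ (Real.exp (-(s * n * ((√n)⁻¹ * t) ^ 2 / 2)) : ℂ)) atTop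
        (𝓝 (Real.exp (-(s * t ^ 2 / 2)))) := by
      refine tendsto_const_nhds.congr' ?_
      filter_upwards [eventually_gt_atTop 0] with n hn
      have n_pos : (0 : ℝ) < n := Nat.cast_pos.2 hn
      rw [mul_pow, inv_pow, Real.sq_sqrt n_pos.le]
      field_simp
    have h_charFun := h_error.add h_gauss
    have meas_X (n : ℕ) : AEMeasurable (X n) μ :=
      ((h.stronglyAdapted n).mono (ℱ.le n)).measurable.aemeasurable
    simpa [charFun_map_mul_comp (meas_X _), charFun_gaussianReal, neg_div, hs] using h_charFun

end IsAutoregression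

end Autoregression

namespace PAModel

variable {Ω : Type} {mΩ : MeasurableSpace Ω} {μ : Measure Ω} {δ : ℝ} (M : PAModel mΩ μ δ)

lemma one_le_D {n v : ℕ} (hv : 1 ≤ v) (hvn : v ≤ n) (ω : Ω) : 1 ≤ M.D n v ω := by
  induction n, hv.trans hvn using Nat.le_induction with
  | base =>
    obtain rfl : v = 1 := le_antisymm hvn hv
    simp [M.D_one_one]
  | succ n hn ih =>
    rcases Nat.lt_or_ge n v with h | h
    · obtain rfl : v = n + 1 := by omega
      rw [M.D_succ_new n ω hn]
      split_ifs <;> norm_num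
    · rw [M.D_succ_old n v ω hv h]
      exact (ih h).trans (Nat.le_add_right _ _)

lemma N_nonneg (n k : ℕ) (ω : Ω) : 0 ≤ M.N n k ω := Nat.cast_nonneg _

lemma N_le (n k : ℕ) (ω : Ω) : M.N n k ω ≤ n :=
  Nat.cast_le.2 ((Finset.card_filter_le _ _).trans_eq (Nat.card_Icc 1 n))

lemma N_eq_sum_indicator (n k : ℕ) :
    M.N n k = ∑ v ∈ Finset.Icc 1 n, {ω | M.D n v ω = k}.indicator fun _ ↦ 1 := by
  ext ω
  simp [N, Set.indicator_apply]

lemma measurable_N (n k : ℕ) : Measurable[M.F n] (M.N n k) := by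
  rw [N_eq_sum_indicator, Finset.sum_fn]
  exact Finset.measurable_sum _ fun v _ ↦
    measurable_const.indicator (M.D_meas n v (measurableSet_singleton k))

/-- The event that node `n + 1` attaches to a node which has degree `k` in `G n`. -/
def attachDegree (n k : ℕ) : Set Ω :=
  {ω | M.C n ω ∈ Finset.Icc 1 n ∧ M.D n (M.C n ω) ω = k}

lemma measurableSet_C_eq (n v : ℕ) : MeasurableSet {ω | M.C n ω = v} :=
  M.F.le (n + 1) _ (M.C_meas n (measurableSet_singleton v))

lemma indicator_attachDegree (n k : ℕ) :
    (M.attachDegree n k).indicator (fun _ ↦ (1 : ℝ)) =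
      ∑ v ∈ Finset.Icc 1 n,
        {ω | M.D n v ω = k}.indicator ({ω | M.C n ω = v}.indicator fun _ ↦ 1) := by
  ext ω
  simp only [Finset.sum_apply, Set.indicator_apply, Set.mem_ofPred_eq, attachDegree]
  simp only [← ite_and, and_comm (b := M.C n ω = _)]
  simp only [ite_and, Finset.sum_ite_eq]

lemma measurableSet_attachDegree (n k : ℕ) : MeasurableSet (M.attachDegree n k) := by
  have h_union : M.attachDegree n k
      = ⋃ v ∈ Finset.Icc 1 n, {ω | M.C n ω = v} ∩ {ω | M.D n v ω = k} := by
    ext ω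
    simp [attachDegree]
  rw [h_union]
  exact Finset.measurableSet_biUnion _ fun v _ ↦
    (M.measurableSet_C_eq n v).inter (M.F.le n _ (M.D_meas n v (measurableSet_singleton k)))

lemma condExp_attachDegree [IsFiniteMeasure μ] (n k : ℕ) :
    μ[(M.attachDegree n k).indicator (fun _ ↦ (1 : ℝ)) | M.F n] =ᵐ[μ]
      fun ω ↦ (k + δ) / (n * (2 + δ) + (1 + δ)) * M.N n k ω := by
  have int_C (v : ℕ) : Integrable ({ω | M.C n ω = v}.indicator fun _ ↦ (1 : ℝ)) μ :=
    (integrable_const 1).indicator (M.measurableSet_C_eq n v)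
  have meas_D (v : ℕ) : MeasurableSet[M.F n] {ω | M.D n v ω = k} :=
    M.D_meas n v (measurableSet_singleton k)
  have condExp_node : ∀ᵐ ω ∂μ, ∀ v ∈ Finset.Icc 1 n,
      (μ[{ω | M.D n v ω = k}.indicator ({ω | M.C n ω = v}.indicator fun _ ↦ 1) | M.F n]) ω
        = (k + δ) / (n * (2 + δ) + (1 + δ)) * {ω | M.D n v ω = k}.indicator (fun _ ↦ 1) ω := by
    refine (Finset.eventually_all _).2 fun v hv ↦ ?_
    obtain ⟨one_le_v, v_le⟩ := Finset.mem_Icc.1 hv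
    filter_upwards [condExp_indicator (int_C v) (meas_D v), M.attach_prob n v one_le_v v_le]
      with ω h_indicator h_attach
    rw [h_indicator]
    by_cases h : M.D n v ω = k <;> simp [h, h_attach]
  rw [indicator_attachDegree]
  filter_upwards [condExp_finsetSum (fun v (_ : v ∈ Finset.Icc 1 n) ↦
    (int_C v).indicator (M.F.le n _ (meas_D v))) (M.F n), condExp_node] with ω h_sum h_node
  rw [h_sum, Finset.sum_apply, Finset.sum_congr rfl h_node, ← Finset.mul_sum, N_eq_sum_indicator,
    Finset.sum_apply]

/-- The event that the number of nodes of degree one does not grow when node `n + 1` arrives: the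
new node attaches to itself, or to a node of degree one. -/
def leafCountStays (n : ℕ) : Set Ω := {ω | M.C n ω = 0} ∪ M.attachDegree n 1

lemma measurableSet_leafCountStays (n : ℕ) : MeasurableSet (M.leafCountStays n) :=
  (M.measurableSet_C_eq n 0).union (M.measurableSet_attachDegree n 1)

lemma indicator_leafCountStays (n : ℕ) :
    (M.leafCountStays n).indicator (fun _ ↦ (1 : ℝ)) =
      {ω | M.C n ω = 0}.indicator (fun _ ↦ 1) + (M.attachDegree n 1).indicator fun _ ↦ 1 := by
  refine Set.indicator_union_of_disjoint (Set.disjoint_left.2 fun ω h_zero h_attach ↦ ?_) _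
  have one_le_C : 1 ≤ M.C n ω := (Finset.mem_Icc.1 h_attach.1).1
  exact Nat.one_le_iff_ne_zero.1 one_le_C h_zero

lemma N_one_succ {n : ℕ} (hn : 1 ≤ n) (ω : Ω) :
    M.N (n + 1) 1 ω = M.N n 1 ω + 1 - (M.leafCountStays n).indicator (fun _ ↦ 1) ω := by
  have new_node : {ω | M.D (n + 1) (n + 1) ω = 1}.indicator (fun _ ↦ (1 : ℝ)) ω
      = 1 - {ω | M.C n ω = 0}.indicator (fun _ ↦ 1) ω := by
    by_cases h : M.C n ω = 0 <;> simp [M.D_succ_new n ω hn, h]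
  have old_node : ∀ v ∈ Finset.Icc 1 n, {ω | M.D (n + 1) v ω = 1}.indicator (fun _ ↦ (1 : ℝ)) ω
      = {ω | M.D n v ω = 1}.indicator (fun _ ↦ 1) ω
        - {ω | M.D n v ω = 1}.indicator ({ω | M.C n ω = v}.indicator fun _ ↦ 1) ω := by
    intro v hv
    obtain ⟨one_le_v, v_le⟩ := Finset.mem_Icc.1 hv
    have D_ne_zero : M.D n v ω ≠ 0 := Nat.one_le_iff_ne_zero.1 (M.one_le_D one_le_v v_le ω)
    by_cases h : M.C n ω = v <;> simp [Set.indicator_apply, M.D_succ_old n v ω one_le_v v_le, h,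
      D_ne_zero]
  rw [indicator_leafCountStays, indicator_attachDegree, N_eq_sum_indicator, N_eq_sum_indicator]
  simp only [Pi.add_apply, Finset.sum_apply]
  rw [Finset.sum_Icc_succ_top (Nat.le_add_left 1 n), Finset.sum_congr rfl old_node,
    Finset.sum_sub_distrib, new_node]
  ring

/-- The attachment weight `1 + δ` of a node of degree one, in units of the total weight `2 + δ`
added by each new node; it is the `a` in the
coefficients `n / (n + a)` of the autoregression below. -/
noncomputable def leafWeight (δ : ℝ) : ℝ := (1 + δ) / (2 + δ)

lemma leafWeight_pos (hδ : -1 < δ) : 0 < leafWeight δ :=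
  div_pos (by linarith) (by linarith)

lemma leafWeight_le_one (hδ : -1 < δ) : leafWeight δ ≤ 1 :=
  (div_le_one (by linarith)).2 (by linarith)

lemma one_add_leafWeight (hδ : -1 < δ) : 1 + leafWeight δ = (3 + 2 * δ) / (2 + δ) := by
  have : 0 < 2 + δ := by linarith
  rw [leafWeight]
  field_simp
  ring

lemma leafVariance_eq (hδ : -1 < δ) :
    leafWeight δ / (1 + leafWeight δ) ^ 2 / (1 + 2 * leafWeight δ)
      = (1 + δ) * (2 + δ) ^ 2 / ((3 + 2 * δ) ^ 2 * (4 + 3 * δ)) := by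
  have : 0 < 2 + δ := by linarith
  have : 0 < 3 + 2 * δ := by linarith
  have : 0 < 4 + 3 * δ := by linarith
  have one_add_two_mul : 1 + 2 * leafWeight δ = (4 + 3 * δ) / (2 + δ) := by
    rw [leafWeight]
    field_simp
    ring
  rw [one_add_leafWeight hδ, one_add_two_mul, leafWeight]
  field_simp

/-- The conditional probability of `M.leafCountStays n` given `G n`. -/
noncomputable def stayProb (n : ℕ) (ω : Ω) : ℝ :=
  leafWeight δ * (M.N n 1 ω + 1) / (n + leafWeight δ)

lemma stayProb_mem_Icc (hδ : -1 < δ) (n : ℕ) (ω : Ω) : M.stayProb n ω ∈ Set.Icc 0 1 := by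
  have a_pos := leafWeight_pos hδ
  have N_nonneg := M.N_nonneg n 1 ω
  refine ⟨div_nonneg (by positivity) (by positivity), (div_le_one (by positivity)).2 ?_⟩
  nlinarith [mul_le_of_le_one_left N_nonneg (leafWeight_le_one hδ), M.N_le n 1 ω]

lemma condExp_leafCountStays [IsFiniteMeasure μ] (hδ : -1 < δ) {n : ℕ} (hn : 1 ≤ n) :
    μ[(M.leafCountStays n).indicator (fun _ ↦ (1 : ℝ)) | M.F n] =ᵐ[μ] M.stayProb n := by
  rw [indicator_leafCountStays]
  filter_upwards [condExp_add ((integrable_const (1 : ℝ)).indicator (M.measurableSet_C_eq n 0))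
    ((integrable_const (1 : ℝ)).indicator (M.measurableSet_attachDegree n 1)) (M.F n),
    M.self_prob n hn, M.condExp_attachDegree n 1] with ω h_add h_self h_attach
  have weight_pos : 0 < 2 + δ := by linarith
  have leaf_weight_pos : 0 < 1 + δ := by linarith
  rw [h_add, Pi.add_apply, h_self, h_attach, stayProb, leafWeight]
  push_cast
  field_simp
  ring

/-- The number of nodes of degree one, centered at its mean when `n ≥ 1`. At the index `0`, which
carries no graph, it is a constant, and the value of this constant is irrelevant. -/
noncomputable def centeredLeaves (n : ℕ) (ω : Ω) : ℝ :=
  M.N n 1 ω - (n - 1) / (1 + leafWeight δ)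

lemma stayProb_eq (hδ : -1 < δ) (n : ℕ) (ω : Ω) :
    M.stayProb n ω = leafWeight δ / (1 + leafWeight δ)
      + leafWeight δ / (n + leafWeight δ) * M.centeredLeaves n ω := by
  have a_pos := leafWeight_pos hδ
  rw [stayProb, centeredLeaves]
  field_simp
  ring

lemma measurable_centeredLeaves (n : ℕ) : Measurable[M.F n] (M.centeredLeaves n) :=
  (M.measurable_N n 1).sub_const _

lemma integrable_centeredLeaves [IsFiniteMeasure μ] (n : ℕ) :
    Integrable (M.centeredLeaves n) μ := by
  refine .sub (.of_bound ((M.measurable_N n 1).mono (M.F.le n) le_rfl).aestronglyMeasurable n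
    (.of_forall fun ω ↦ ?_)) (integrable_const _)
  rw [Real.norm_of_nonneg (M.N_nonneg n 1 ω)]
  exact M.N_le n 1 ω

lemma centeredLeaves_succ (hδ : -1 < δ) {n : ℕ} (hn : 1 ≤ n) :
    M.centeredLeaves (n + 1) = -(M.leafCountStays n).indicator (fun _ ↦ 1)
      + (M.centeredLeaves n + fun _ ↦ leafWeight δ / (1 + leafWeight δ)) := by
  ext ω
  have a_pos := leafWeight_pos hδ
  simp only [centeredLeaves, M.N_one_succ hn, Pi.add_apply, Pi.neg_apply, Nat.cast_succ]
  field_simp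
  ring

lemma centeredLeaves_one : M.centeredLeaves 1 = 0 := by
  ext ω
  simp [centeredLeaves, N, Finset.filter_singleton, M.D_one_one]

/-- The coefficients of the autoregression satisfied by `M.centeredLeaves`. -/
noncomputable def leafCoeff (δ : ℝ) (n : ℕ) : ℝ := n / (n + leafWeight δ)

lemma abs_leafCoeff_le_one (hδ : -1 < δ) (n : ℕ) : |leafCoeff δ n| ≤ 1 := by
  have a_pos := leafWeight_pos hδ
  have a_nonneg := a_pos.le
  rw [leafCoeff, abs_of_nonneg (by positivity), div_le_one (by positivity)]
  exact le_add_of_nonneg_right a_nonneg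

lemma tendsto_mul_one_sub_leafCoeff (hδ : -1 < δ) :
    Tendsto (fun n : ℕ ↦ n * (1 - leafCoeff δ n)) atTop (nhds (leafWeight δ)) := by
  have a_pos := leafWeight_pos hδ
  have h_lim := (tendsto_natCast_div_add_atTop (leafWeight δ)).const_mul (leafWeight δ)
  rw [mul_one] at h_lim
  refine h_lim.congr fun n ↦ ?_
  rw [leafCoeff]
  field_simp
  ring

lemma innovation_centeredLeaves (hδ : -1 < δ) {n : ℕ} (hn : 1 ≤ n) :
    innovation M.centeredLeaves (leafCoeff δ) n
      = M.stayProb n - (M.leafCountStays n).indicator fun _ ↦ 1 := by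
  ext ω
  have a_pos := leafWeight_pos hδ
  simp only [innovation, M.centeredLeaves_succ hδ hn, leafCoeff, M.stayProb_eq hδ, Pi.sub_apply,
    Pi.add_apply, Pi.neg_apply, Pi.smul_apply, smul_eq_mul]
  field_simp
  ring

lemma innovation_centeredLeaves_zero : innovation M.centeredLeaves (leafCoeff δ) 0 = 0 := by
  simp [innovation, centeredLeaves_one, leafCoeff]

lemma abs_innovation_centeredLeaves_le (hδ : -1 < δ) (n : ℕ) (ω : Ω) :
    |innovation M.centeredLeaves (leafCoeff δ) n ω| ≤ 1 := by
  rcases n.eq_zero_or_pos with rfl | hn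
  · simp [innovation_centeredLeaves_zero]
  · obtain ⟨prob_nonneg, prob_le_one⟩ := M.stayProb_mem_Icc hδ n ω
    rw [M.innovation_centeredLeaves hδ hn, abs_le]
    rcases Set.indicator_eq_zero_or_self (M.leafCountStays n) (fun _ ↦ (1 : ℝ)) ω with h | h <;>
      rw [Pi.sub_apply, h] <;> constructor <;> linarith

section FiniteMeasure

variable [IsFiniteMeasure μ]

lemma integrable_indicator_leafCountStays (n : ℕ) :
    Integrable ((M.leafCountStays n).indicator fun _ ↦ (1 : ℝ)) μ :=
  (integrable_const 1).indicator (M.measurableSet_leafCountStays n)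

lemma isAutoregression_centeredLeaves (hδ : -1 < δ) :
    IsAutoregression M.centeredLeaves (leafCoeff δ) M.F μ where
  stronglyAdapted n := (M.measurable_centeredLeaves n).stronglyMeasurable
  condExp_succ n := by
    rcases n.eq_zero_or_pos with rfl | hn
    · simp [centeredLeaves_one, leafCoeff]
    have past_meas : StronglyMeasurable[M.F n]
        (M.centeredLeaves n + fun _ ↦ leafWeight δ / (1 + leafWeight δ)) :=
      ((M.measurable_centeredLeaves n).add_const _).stronglyMeasurable
    have past_int : Integrable
        (M.centeredLeaves n + fun _ ↦ leafWeight δ / (1 + leafWeight δ)) μ :=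
      (M.integrable_centeredLeaves n).add (integrable_const _)
    rw [M.centeredLeaves_succ hδ hn]
    filter_upwards [condExp_add (M.integrable_indicator_leafCountStays n).neg past_int (M.F n),
      condExp_neg (μ := μ) ((M.leafCountStays n).indicator fun _ ↦ (1 : ℝ)) (M.F n),
      M.condExp_leafCountStays hδ hn] with ω h_add h_neg h_prob
    have a_pos := leafWeight_pos hδ
    rw [h_add, Pi.add_apply, h_neg, Pi.neg_apply, h_prob,
      condExp_of_stronglyMeasurable (M.F.le n) past_meas past_int, M.stayProb_eq hδ]
    simp only [leafCoeff, Pi.add_apply, Pi.smul_apply, smul_eq_mul]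
    field_simp
    ring

lemma condVar_centeredLeaves_succ (hδ : -1 < δ) {n : ℕ} (hn : 1 ≤ n) :
    Var[M.centeredLeaves (n + 1); μ | M.F n] =ᵐ[μ]
      fun ω ↦ M.stayProb n ω * (1 - M.stayProb n ω) := by
  rw [M.centeredLeaves_succ hδ hn]
  have past_meas : StronglyMeasurable[M.F n]
      (M.centeredLeaves n + fun _ ↦ leafWeight δ / (1 + leafWeight δ)) :=
    ((M.measurable_centeredLeaves n).add_const _).stronglyMeasurable
  filter_upwards [condVar_add_of_stronglyMeasurable (M.F.le n)
      (M.integrable_indicator_leafCountStays n).neg past_meas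
      ((M.integrable_centeredLeaves n).add (integrable_const _)),
    condVar_neg (m := M.F n) (μ := μ) ((M.leafCountStays n).indicator fun _ ↦ (1 : ℝ)),
    condVar_indicator_one (μ := μ) (M.F.le n) (M.measurableSet_leafCountStays n),
    M.condExp_leafCountStays hδ hn] with ω h_add h_neg h_indicator h_prob
  rw [h_add, h_neg, h_indicator, h_prob]

lemma memLp_innovation_centeredLeaves (hδ : -1 < δ) (p : ENNReal) (n : ℕ) :
    MemLp (innovation M.centeredLeaves (leafCoeff δ) n) p μ := by
  have meas (k : ℕ) : Measurable (M.centeredLeaves k) :=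
    (M.measurable_centeredLeaves k).mono (M.F.le k) le_rfl
  exact .of_bound ((meas (n + 1)).sub ((meas n).const_smul _)).aestronglyMeasurable 1
    (.of_forall (M.abs_innovation_centeredLeaves_le hδ n))

end FiniteMeasure

lemma abs_stayProb_sub_le (hδ : -1 < δ) {n : ℕ} (hn : 1 ≤ n) (ω : Ω) :
    |M.stayProb n ω - leafWeight δ / (1 + leafWeight δ)| ≤ |M.centeredLeaves n ω| / n := by
  have a_pos := leafWeight_pos hδ
  have n_pos : (0 : ℝ) < n := Nat.cast_pos.2 hn
  rw [M.stayProb_eq hδ, add_sub_cancel_left, abs_mul, abs_of_nonneg (by positivity)]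
  have coeff_le : leafWeight δ / (n + leafWeight δ) ≤ 1 / n :=
    div_le_div₀ zero_le_one (leafWeight_le_one hδ) n_pos (le_add_of_nonneg_right a_pos.le)
  exact (mul_le_mul_of_nonneg_right coeff_le (abs_nonneg _)).trans_eq (one_div_mul_eq_div _ _)

lemma abs_stayProb_var_sub_le (hδ : -1 < δ) {n : ℕ} (hn : 1 ≤ n) (ω : Ω) :
    |M.stayProb n ω * (1 - M.stayProb n ω) - leafWeight δ / (1 + leafWeight δ) ^ 2|
      ≤ |M.centeredLeaves n ω| / n := by
  have a_pos := leafWeight_pos hδ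
  have limit_mem : leafWeight δ / (1 + leafWeight δ) ∈ Set.Icc 0 1 :=
    ⟨by positivity, (div_le_one (by positivity)).2 (by linarith)⟩
  have var_eq : leafWeight δ / (1 + leafWeight δ) ^ 2
      = leafWeight δ / (1 + leafWeight δ) * (1 - leafWeight δ / (1 + leafWeight δ)) := by
    field_simp
    ring
  rw [var_eq]
  exact (abs_mul_one_sub_sub_le limit_mem (M.stayProb_mem_Icc hδ n ω)).trans
    (M.abs_stayProb_sub_le hδ hn ω)

lemma sqrt_mul_leafProportion_sub (hδ : -1 < δ) (n : ℕ) (ω : Ω) :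
    √n * (M.N n 1 ω / n - (2 + δ) / (3 + 2 * δ))
      = (√n)⁻¹ * M.centeredLeaves n ω + -((√n)⁻¹ * ((2 + δ) / (3 + 2 * δ))) := by
  rw [centeredLeaves, one_add_leafWeight hδ, div_eq_mul_inv _ ((3 + 2 * δ) / (2 + δ)), inv_div]
  linear_combination M.N n 1 ω * Real.sqrt_div_self (x := n)
    + (2 + δ) / (3 + 2 * δ) * Real.div_sqrt (x := n)

variable [IsProbabilityMeasure μ]

lemma integral_abs_innovation_centeredLeaves_pow_le (hδ : -1 < δ) (k n : ℕ) :
    ∫ ω, |innovation M.centeredLeaves (leafCoeff δ) n ω| ^ k ∂μ ≤ 1 := by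
  refine (integral_mono_of_nonneg (.of_forall fun _ ↦ by positivity) (integrable_const (1 : ℝ))
    (.of_forall fun ω ↦ pow_le_one₀ (abs_nonneg _)
      (M.abs_innovation_centeredLeaves_le hδ n ω))).trans_eq ?_
  simp

lemma tendsto_integral_abs_condVar_centeredLeaves_sub (hδ : -1 < δ) :
    Tendsto (fun n ↦ ∫ ω, |(Var[M.centeredLeaves (n + 1); μ | M.F n]) ω
      - leafWeight δ / (1 + leafWeight δ) ^ 2| ∂μ) atTop (nhds 0) := by
  have memLp_zero : MemLp (M.centeredLeaves 0) 2 μ := by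
    have zero_eq : M.centeredLeaves 0 = fun _ ↦ 1 / (1 + leafWeight δ) := by
      ext ω
      simp [centeredLeaves, N, neg_div]
    exact zero_eq ▸ memLp_const _
  have sq_le_one (n : ℕ) : ∫ ω, innovation M.centeredLeaves (leafCoeff δ) n ω ^ 2 ∂μ ≤ 1 := by
    simpa using M.integral_abs_innovation_centeredLeaves_pow_le (μ := μ) hδ 2 n
  refine squeeze_zero' (.of_forall fun _ ↦ integral_nonneg fun _ ↦ abs_nonneg _) ?_
    ((M.isAutoregression_centeredLeaves hδ).tendsto_integral_abs_div (abs_leafCoeff_le_one hδ)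
      (memLp_of_innovation memLp_zero (M.memLp_innovation_centeredLeaves hδ 2)) sq_le_one)
  filter_upwards [eventually_ge_atTop 1] with n hn
  rw [← integral_div]
  refine integral_mono_of_nonneg (.of_forall fun _ ↦ abs_nonneg _)
    ((M.integrable_centeredLeaves n).abs.div_const _) ?_
  filter_upwards [M.condVar_centeredLeaves_succ hδ hn] with ω hω
  simpa only [hω] using M.abs_stayProb_var_sub_le hδ hn ω

lemma tendstoInDistribution_centeredLeaves (hδ : -1 < δ) :
    TendstoInDistribution (fun (n : ℕ) ω ↦ (√n)⁻¹ * M.centeredLeaves n ω) atTop id (fun _ ↦ μ)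
      (gaussianReal 0 ((1 + δ) * (2 + δ) ^ 2 / ((3 + 2 * δ) ^ 2 * (4 + 3 * δ))).toNNReal) := by
  obtain ⟨a, ha⟩ : ∃ a : NNReal, (a : ℝ) = leafWeight δ := ⟨⟨_, (leafWeight_pos hδ).le⟩, rfl⟩
  have var_eq : a / (1 + a) ^ 2 / (1 + 2 * a)
      = ((1 + δ) * (2 + δ) ^ 2 / ((3 + 2 * δ) ^ 2 * (4 + 3 * δ))).toNNReal := by
    rw [← leafVariance_eq hδ, ← ha]
    refine Real.toNNReal_coe.symm.trans ?_
    push_cast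
    rfl
  have condVar_tendsto : Tendsto (fun n ↦ ∫ ω, |(Var[M.centeredLeaves (n + 1); μ | M.F n]) ω
      - (a / (1 + a) ^ 2 : NNReal)| ∂μ) atTop (nhds 0) := by
    simpa [ha] using M.tendsto_integral_abs_condVar_centeredLeaves_sub (μ := μ) hδ
  exact (M.isAutoregression_centeredLeaves hδ).tendstoInDistribution (abs_leafCoeff_le_one hδ)
    (ha ▸ tendsto_mul_one_sub_leafCoeff hδ) (M.integrable_centeredLeaves 0)
    (M.memLp_innovation_centeredLeaves hδ 3)
    (M.integral_abs_innovation_centeredLeaves_pow_le hδ 3) condVar_tendsto (var_eq ▸ .id)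

theorem tendstoInDistribution_leafProportion (hδ : -1 < δ) :
    TendstoInDistribution (fun (n : ℕ) ω ↦ √n * (M.N n 1 ω / n - (2 + δ) / (3 + 2 * δ))) atTop id
      (fun _ ↦ μ)
      (gaussianReal 0 ((1 + δ) * (2 + δ) ^ 2 / ((3 + 2 * δ) ^ 2 * (4 + 3 * δ))).toNNReal) := by
  have shift_tendsto :
      Tendsto (fun n : ℕ ↦ -((√n)⁻¹ * ((2 + δ) / (3 + 2 * δ)))) atTop (nhds 0) := by
    simpa using (tendsto_inv_sqrt_natCast.mul_const ((2 + δ) / (3 + 2 * δ))).neg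
  have h_shifted :=
    (M.tendstoInDistribution_centeredLeaves (μ := μ) hδ).add_of_tendstoInMeasure_const
      (tendstoInMeasure_of_tendsto_ae (fun _ ↦ aestronglyMeasurable_const)
        (.of_forall fun _ ↦ shift_tendsto)) (fun _ ↦ aemeasurable_const)
  simp only [add_zero] at h_shifted
  simp only [M.sqrt_mul_leafProportion_sub hδ]
  exact h_shifted

end PAModel

/-- The number of nodes of degree 1 at stage `n` is asymptotically normal:
`√n (N_n(1)/n − p₁)` converges in distribution (i.e. integrals against every
bounded continuous function converge) to `N(0, σ₁²(δ))`, where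
`p₁ = (2+δ)/(3+2δ)` and `σ₁²(δ) = (1+δ)(2+δ)²/((3+2δ)²(4+3δ))`. -/
theorem clt_degree_one {Ω : Type} {mΩ : MeasurableSpace Ω} {μ : Measure Ω}
    [IsProbabilityMeasure μ] {δ : ℝ} (hδ : -1 < δ) (M : PAModel mΩ μ δ) :
    ∀ f : BoundedContinuousFunction ℝ ℝ,
      Tendsto
        (fun n : ℕ =>
          ∫ ω, f (Real.sqrt n * (M.N n 1 ω / n - (2 + δ) / (3 + 2 * δ))) ∂μ)
        atTop
        (nhds (∫ x, f x
          ∂(gaussianReal 0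
            (((1 + δ) * (2 + δ) ^ 2 / ((3 + 2 * δ) ^ 2 * (4 + 3 * δ))).toNNReal)))) := by
  exact tendsto_integral_of_tendstoInDistribution (M.tendstoInDistribution_leafProportion hδ)
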